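/- Let Ψ : (0,∞) → ℝ be a critical or subcritical branching mechanism, i.e. Ψ(u) = αu + βu² + ∫_{(0,∞)} (e^{−ux} − 1 + ux) π(dx) with α ≥ 0, β ≥ 0 and π a Borel measure on (0,∞) satisfying ∫_{(0,∞)} min(x, x²) π(dx) < ∞, and assume (α, β, π) ≠ (0,0,0) (so that Ψ is strictly positive and strictly increasing on (0,∞)). Then the inverse function Ψ⁻¹, defined on the interval (0, S) where S = lim_{u→∞} Ψ(u) ∈ (0,∞], is a Bernstein function: it is infinitely differentiable, nonnegative, and satisfies (−1)^k (Ψ⁻¹)^{(k+1)} ≥ 0 on (0, S) for every integer k ≥ 0. -/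

import Mathlib

open MeasureTheory Set Filter

noncomputable section

/-!
Differentiating twice under the integral, `Ψ''` is a nonnegative constant plus the Laplace
transform of `x² π(dx)`, hence completely monotone, and `Ψ'` is a positive Bernstein function.
Therefore `φ = 1 / Ψ'` is completely monotone, by induction on the order of the derivative
through `-φ' = Ψ'' φ²`. The inverse `g` solves the autonomous equation `g' = φ ∘ g`, so
`-(f ∘ g)' = (-f' φ) ∘ g` for every differentiable `f`, and a second induction shows that `f ∘ g`
is completely monotone whenever `f` is. The case `f = φ` says that `g'` is completely monotone.
-/

open ProbabilityTheory
open scoped ContDiff Topology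

/-- Complete monotonicity of order `n` on `s`. The order is finite because the closure properties
are proved by induction on it; a completely monotone function is one of every order `n`.
The derivatives are two-sided, so `s` is meant to be open. -/
structure CompletelyMonotoneOn (n : ℕ) (f : ℝ → ℝ) (s : Set ℝ) : Prop where
  contDiffOn : ContDiffOn ℝ n f s
  iteratedDeriv_nonneg : ∀ k ≤ n, ∀ x ∈ s, 0 ≤ (-1 : ℝ) ^ k * iteratedDeriv k f x

namespace CompletelyMonotoneOn

variable {n : ℕ} {f f' g φ : ℝ → ℝ} {s t : Set ℝ}

lemma nonneg (hf : CompletelyMonotoneOn n f s) {x : ℝ} (hx : x ∈ s) : 0 ≤ f x := by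
  simpa using hf.iteratedDeriv_nonneg 0 n.zero_le x hx

lemma of_le {m : ℕ} (hf : CompletelyMonotoneOn n f s) (hmn : m ≤ n) :
    CompletelyMonotoneOn m f s where
  contDiffOn := hf.contDiffOn.of_le (mod_cast hmn)
  iteratedDeriv_nonneg k hk := hf.iteratedDeriv_nonneg k (hk.trans hmn)

lemma congr (hs : IsOpen s) (hf : CompletelyMonotoneOn n f s) (hfg : EqOn g f s) :
    CompletelyMonotoneOn n g s where
  contDiffOn := hf.contDiffOn.congr hfg
  iteratedDeriv_nonneg k hk x hx := by
    rw [(hfg.eventuallyEq_of_mem (hs.mem_nhds hx)).iteratedDeriv_eq]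
    exact hf.iteratedDeriv_nonneg k hk x hx

lemma mono (hf : CompletelyMonotoneOn n f t) (hst : s ⊆ t) : CompletelyMonotoneOn n f s where
  contDiffOn := hf.contDiffOn.mono hst
  iteratedDeriv_nonneg k hk x hx := hf.iteratedDeriv_nonneg k hk x (hst hx)

lemma zero_iff : CompletelyMonotoneOn 0 f s ↔ ContinuousOn f s ∧ ∀ x ∈ s, 0 ≤ f x := by
  refine ⟨fun hf ↦ ⟨hf.contDiffOn.continuousOn, fun x hx ↦ hf.nonneg hx⟩, fun hf ↦ ⟨?_, ?_⟩⟩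
  · simpa using hf.1
  · simpa using hf.2

lemma succ_iff (hs : IsOpen s) :
    CompletelyMonotoneOn (n + 1) f s ↔
      DifferentiableOn ℝ f s ∧ (∀ x ∈ s, 0 ≤ f x) ∧
        CompletelyMonotoneOn n (fun x ↦ -deriv f x) s := by
  have sign (k : ℕ) (x : ℝ) : (-1 : ℝ) ^ k * iteratedDeriv k (fun x ↦ -deriv f x) x =
      (-1) ^ (k + 1) * iteratedDeriv (k + 1) f x := by
    rw [iteratedDeriv_fun_neg, iteratedDeriv_succ']
    ring
  constructor
  · intro hf
    have hd : ContDiffOn ℝ (n + 1) f s := mod_cast hf.contDiffOn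
    rw [contDiffOn_succ_iff_deriv_of_isOpen hs] at hd
    refine ⟨hd.1, fun x hx ↦ hf.nonneg hx, hd.2.2.neg, fun k hk x hx ↦ ?_⟩
    rw [sign]
    exact hf.iteratedDeriv_nonneg (k + 1) (by lia) x hx
  · rintro ⟨hd, h0, hf'⟩
    refine ⟨?_, fun k hk x hx ↦ ?_⟩
    · push_cast
      exact (contDiffOn_succ_iff_deriv_of_isOpen hs).2
        ⟨hd, by simp, by simpa using hf'.contDiffOn.neg⟩
    · cases k with
      | zero => simpa using h0 x hx
      | succ k =>
        rw [← sign]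
        exact hf'.iteratedDeriv_nonneg k (by lia) x hx

lemma succ_of_hasDerivAt (hs : IsOpen s) (h0 : ∀ x ∈ s, 0 ≤ f x)
    (hf : ∀ x ∈ s, HasDerivAt f (-f' x) x) (hf' : CompletelyMonotoneOn n f' s) :
    CompletelyMonotoneOn (n + 1) f s :=
  (succ_iff hs).2 ⟨fun x hx ↦ (hf x hx).differentiableAt.differentiableWithinAt, h0,
    hf'.congr hs fun x hx ↦ by simp [(hf x hx).deriv]⟩

lemma exists_hasDerivAt (hs : IsOpen s) (hf : CompletelyMonotoneOn (n + 1) f s) :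
    ∃ f' : ℝ → ℝ, (∀ x ∈ s, HasDerivAt f (-f' x) x) ∧ CompletelyMonotoneOn n f' s := by
  obtain ⟨hd, -, hf'⟩ := (succ_iff hs).1 hf
  refine ⟨fun x ↦ -deriv f x, fun x hx ↦ ?_, hf'⟩
  simpa using (hd.differentiableAt (hs.mem_nhds hx)).hasDerivAt

lemma const {c : ℝ} (hc : 0 ≤ c) : CompletelyMonotoneOn n (fun _ ↦ c) s where
  contDiffOn := contDiffOn_const
  iteratedDeriv_nonneg k _ x _ := by
    cases k <;> simp [iteratedDeriv_const, hc]

lemma add (hs : IsOpen s) (hf : CompletelyMonotoneOn n f s) (hg : CompletelyMonotoneOn n g s) :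
    CompletelyMonotoneOn n (fun x ↦ f x + g x) s where
  contDiffOn := hf.contDiffOn.add hg.contDiffOn
  iteratedDeriv_nonneg k hk x hx := by
    have hfk := (hf.of_le hk).contDiffOn.contDiffAt (hs.mem_nhds hx)
    have hgk := (hg.of_le hk).contDiffOn.contDiffAt (hs.mem_nhds hx)
    rw [iteratedDeriv_fun_add hfk hgk, mul_add]
    exact add_nonneg (hf.iteratedDeriv_nonneg k hk x hx) (hg.iteratedDeriv_nonneg k hk x hx)

lemma mul (hs : IsOpen s) (hf : CompletelyMonotoneOn n f s) (hg : CompletelyMonotoneOn n g s) :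
    CompletelyMonotoneOn n (fun x ↦ f x * g x) s := by
  induction n generalizing f g with
  | zero =>
    exact zero_iff.2 ⟨hf.contDiffOn.continuousOn.mul hg.contDiffOn.continuousOn,
      fun x hx ↦ mul_nonneg (hf.nonneg hx) (hg.nonneg hx)⟩
  | succ n ih =>
    obtain ⟨f', hf', hf'_mono⟩ := hf.exists_hasDerivAt hs
    obtain ⟨g', hg', hg'_mono⟩ := hg.exists_hasDerivAt hs
    refine succ_of_hasDerivAt hs (fun x hx ↦ mul_nonneg (hf.nonneg hx) (hg.nonneg hx))
      (fun x hx ↦ ((hf' x hx).fun_mul (hg' x hx)).congr_deriv ?_)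
      ((ih hf'_mono (hg.of_le n.le_succ)).add hs (ih (hf.of_le n.le_succ) hg'_mono))
    ring

lemma comp_of_hasDerivAt (ht : IsOpen t) (hs : IsOpen s) (hgs : MapsTo g t s)
    (hg : ∀ y ∈ t, HasDerivAt g (φ (g y)) y) (hφ : CompletelyMonotoneOn n φ s)
    (hf : CompletelyMonotoneOn n f s) : CompletelyMonotoneOn n (fun y ↦ f (g y)) t := by
  induction n generalizing f with
  | zero =>
    have hg_cont : ContinuousOn g t := fun y hy ↦ (hg y hy).continuousAt.continuousWithinAt
    exact zero_iff.2 ⟨hf.contDiffOn.continuousOn.comp hg_cont hgs,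
      fun y hy ↦ hf.nonneg (hgs hy)⟩
  | succ n ih =>
    obtain ⟨f', hf', hf'_mono⟩ := hf.exists_hasDerivAt hs
    have hφn := hφ.of_le n.le_succ
    refine succ_of_hasDerivAt ht (fun y hy ↦ hf.nonneg (hgs hy)) (fun y hy ↦ ?_)
      (ih hφn (hf'_mono.mul hs hφn))
    exact ((hf' _ (hgs hy)).comp y (hg y hy)).congr_deriv (by ring)

end CompletelyMonotoneOn

/-- Bernstein functions on `s`, which is meant to be open since the derivatives are two-sided. -/
structure BernsteinOn (f : ℝ → ℝ) (s : Set ℝ) : Prop where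
  contDiffOn : ContDiffOn ℝ ∞ f s
  nonneg : ∀ x ∈ s, 0 ≤ f x
  iteratedDeriv_succ_nonneg :
    ∀ (k : ℕ), ∀ x ∈ s, 0 ≤ (-1 : ℝ) ^ k * iteratedDeriv (k + 1) f x

namespace BernsteinOn

variable {f f' g : ℝ → ℝ} {s : Set ℝ}

lemma hasDerivAt (hs : IsOpen s) (hf : BernsteinOn f s) {x : ℝ} (hx : x ∈ s) :
    HasDerivAt f (deriv f x) x :=
  ((hf.contDiffOn.differentiableOn (by simp)).differentiableAt (hs.mem_nhds hx)).hasDerivAt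

lemma completelyMonotoneOn_deriv (hs : IsOpen s) (hf : BernsteinOn f s) (n : ℕ) :
    CompletelyMonotoneOn n (deriv f) s where
  contDiffOn := ((contDiffOn_infty_iff_deriv_of_isOpen hs).1 hf.contDiffOn).2.of_le
    (mod_cast le_top)
  iteratedDeriv_nonneg k _ x hx := by
    rw [← iteratedDeriv_succ']
    exact hf.iteratedDeriv_succ_nonneg k x hx

lemma of_hasDerivAt (hs : IsOpen s) (h0 : ∀ x ∈ s, 0 ≤ f x)
    (hf : ∀ x ∈ s, HasDerivAt f (f' x) x) (hf' : ∀ n, CompletelyMonotoneOn n f' s) :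
    BernsteinOn f s := by
  have hderiv (n : ℕ) : CompletelyMonotoneOn n (deriv f) s :=
    (hf' n).congr hs fun x hx ↦ (hf x hx).deriv
  refine ⟨(contDiffOn_infty_iff_deriv_of_isOpen hs).2
    ⟨fun x hx ↦ (hf x hx).differentiableAt.differentiableWithinAt,
      contDiffOn_infty.2 fun n ↦ (hderiv n).contDiffOn⟩, h0, fun k x hx ↦ ?_⟩
  rw [iteratedDeriv_succ']
  exact (hderiv k).iteratedDeriv_nonneg k le_rfl x hx

lemma completelyMonotoneOn_inv (hs : IsOpen s) (hf : BernsteinOn f s) (hpos : ∀ x ∈ s, 0 < f x)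
    (n : ℕ) : CompletelyMonotoneOn n (fun x ↦ (f x)⁻¹) s := by
  have hinv_nonneg : ∀ x ∈ s, 0 ≤ (f x)⁻¹ := fun x hx ↦ (inv_pos.2 (hpos x hx)).le
  induction n with
  | zero =>
    exact CompletelyMonotoneOn.zero_iff.2
      ⟨hf.contDiffOn.continuousOn.inv₀ fun x hx ↦ (hpos x hx).ne', hinv_nonneg⟩
  | succ n ih =>
    refine .succ_of_hasDerivAt hs hinv_nonneg (fun x hx ↦ ?_)
      ((hf.completelyMonotoneOn_deriv hs n).mul hs (ih.mul hs ih))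
    exact ((hf.hasDerivAt hs hx).fun_inv (hpos x hx).ne').congr_deriv (by field_simp)

end BernsteinOn

section InverseFunction

variable {𝕜 : Type*} [RCLike 𝕜] {f f' : 𝕜 → 𝕜} {s : Set 𝕜}

lemma hasStrictDerivAt_of_hasDerivAt_of_continuousOn (hs : IsOpen s)
    (hf : ∀ x ∈ s, HasDerivAt f (f' x) x) (hf' : ContinuousOn f' s) {x : 𝕜} (hx : x ∈ s) :
    HasStrictDerivAt f (f' x) x :=
  hasStrictDerivAt_of_hasDerivAt_of_continuousAt (eventually_of_mem (hs.mem_nhds hx) hf)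
    (hf'.continuousAt (hs.mem_nhds hx))

lemma isOpen_image_of_hasDerivAt_ne_zero (hs : IsOpen s) (hf : ∀ x ∈ s, HasDerivAt f (f' x) x)
    (hf' : ContinuousOn f' s) (hne : ∀ x ∈ s, f' x ≠ 0) : IsOpen (f '' s) := by
  rw [isOpen_iff_mem_nhds]
  rintro _ ⟨x, hx, rfl⟩
  rw [← (hasStrictDerivAt_of_hasDerivAt_of_continuousOn hs hf hf' hx).map_nhds_eq (hne x hx)]
  exact image_mem_map (hs.mem_nhds hx)

lemma hasDerivAt_of_leftInvOn {g : 𝕜 → 𝕜} (hs : IsOpen s) (hf : ∀ x ∈ s, HasDerivAt f (f' x) x)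
    (hf' : ContinuousOn f' s) (hne : ∀ x ∈ s, f' x ≠ 0) (hg : LeftInvOn g f s) {y : 𝕜}
    (hy : y ∈ f '' s) : HasDerivAt g (f' (g y))⁻¹ y := by
  obtain ⟨x, hx, rfl⟩ := hy
  rw [hg hx]
  exact ((hasStrictDerivAt_of_hasDerivAt_of_continuousOn hs hf hf' hx).to_local_left_inverse
    (hne x hx) (eventually_of_mem (hs.mem_nhds hx) hg)).hasDerivAt

end InverseFunction

theorem BernsteinOn.of_leftInvOn {f f' g : ℝ → ℝ} {s : Set ℝ} (hs : IsOpen s) (hs0 : s ⊆ Ici 0)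
    (hf : ∀ x ∈ s, HasDerivAt f (f' x) x) (hf' : BernsteinOn f' s) (hpos : ∀ x ∈ s, 0 < f' x)
    (hg : LeftInvOn g f s) : BernsteinOn g (f '' s) := by
  have hcont := hf'.contDiffOn.continuousOn
  have hne : ∀ x ∈ s, f' x ≠ 0 := fun x hx ↦ (hpos x hx).ne'
  have hopen : IsOpen (f '' s) := isOpen_image_of_hasDerivAt_ne_zero hs hf hcont hne
  have hmaps : MapsTo g (f '' s) s := hg.mapsTo (surjOn_image f s)
  have hderiv : ∀ y ∈ f '' s, HasDerivAt g (f' (g y))⁻¹ y := fun y hy ↦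
    hasDerivAt_of_leftInvOn hs hf hcont hne hg hy
  have hinv := hf'.completelyMonotoneOn_inv hs hpos
  exact .of_hasDerivAt hopen (fun y hy ↦ hs0 (hmaps hy)) hderiv fun n ↦
    .comp_of_hasDerivAt (g := g) hopen hs hmaps hderiv (hinv n) (hinv n)

lemma completelyMonotoneOn_mgf {α : Type*} [MeasurableSpace α] {X : α → ℝ} {μ : Measure α}
    (hX : ∀ᵐ a ∂μ, X a ≤ 0) (n : ℕ) :
    CompletelyMonotoneOn n (mgf X μ) (interior (integrableExpSet X μ)) where
  contDiffOn := analyticOnNhd_mgf.contDiffOn isOpen_interior.uniqueDiffOn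
  iteratedDeriv_nonneg k _ u hu := by
    rw [iteratedDeriv_mgf hu, ← integral_const_mul]
    refine integral_nonneg_of_ae ?_
    filter_upwards [hX] with a ha
    have : 0 ≤ (-X a) ^ k * Real.exp (u * X a) :=
      mul_nonneg (pow_nonneg (neg_nonneg.2 ha) k) (Real.exp_nonneg _)
    simpa [neg_pow (X a), mul_assoc] using this

lemma integral_pos_of_ae_pos {α : Type*} [MeasurableSpace α] {μ : Measure α} [NeZero μ]
    {f : α → ℝ} (hf : ∀ᵐ a ∂μ, 0 < f a) (hfi : Integrable f μ) : 0 < ∫ a, f a ∂μ := by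
  rw [integral_pos_iff_support_of_nonneg_ae (hf.mono fun _ ↦ le_of_lt) hfi, pos_iff_ne_zero]
  exact frequently_ae_iff.1 (hf.mono fun _ ↦ ne_of_gt).frequently

lemma one_sub_exp_neg_nonneg {t : ℝ} (ht : 0 ≤ t) : 0 ≤ 1 - Real.exp (-t) := by
  simpa using ht

lemma exp_neg_sub_one_add_nonneg (t : ℝ) : 0 ≤ Real.exp (-t) - 1 + t := by
  linarith [Real.one_sub_le_exp_neg t]

lemma exp_neg_sub_one_add_le (t : ℝ) :
    Real.exp (-t) - 1 + t ≤ t * (1 - Real.exp (-t)) := by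
  have h : Real.exp (-t) * (t + 1) ≤ Real.exp (-t) * Real.exp t := by
    gcongr
    exact Real.add_one_le_exp t
  rw [← Real.exp_add, neg_add_cancel, Real.exp_zero] at h
  linarith

lemma mul_one_sub_exp_neg_le {x v M : ℝ} (hx : 0 ≤ x) (hvM : v ≤ M) :
    x * (1 - Real.exp (-(v * x))) ≤ max 1 M * min x (x ^ 2) := by
  rcases min_choice x (x ^ 2) with h | h <;> rw [h]
  · calc x * (1 - Real.exp (-(v * x))) ≤ 1 * x := by
          linarith [mul_nonneg hx (Real.exp_nonneg (-(v * x)))]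
      _ ≤ max 1 M * x := by gcongr; exact le_max_left 1 M
  · calc x * (1 - Real.exp (-(v * x))) ≤ x * (v * x) := by
          gcongr
          linarith [Real.one_sub_le_exp_neg (v * x)]
      _ = v * x ^ 2 := by ring
      _ ≤ max 1 M * x ^ 2 := by gcongr; exact hvM.trans (le_max_right 1 M)

lemma sq_mul_exp_neg_le {x v c : ℝ} (hx : 0 ≤ x) (hc : 0 < c) (hcv : c ≤ v) :
    x ^ 2 * Real.exp (-(v * x)) ≤ max c⁻¹ 1 * min x (x ^ 2) := by
  rcases min_choice x (x ^ 2) with h | h <;> rw [h]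
  · have hcx : c * x * Real.exp (-(v * x)) ≤ 1 := by
      rw [Real.exp_neg, mul_inv_le_iff₀ (Real.exp_pos _), one_mul]
      calc c * x ≤ v * x := by gcongr
        _ ≤ Real.exp (v * x) := by linarith [Real.add_one_le_exp (v * x)]
    calc x ^ 2 * Real.exp (-(v * x)) = c⁻¹ * x * (c * x * Real.exp (-(v * x))) := by field_simp
      _ ≤ c⁻¹ * x * 1 := by gcongr
      _ ≤ max c⁻¹ 1 * x := by rw [mul_one]; gcongr; exact le_max_left c⁻¹ 1
  · have hexp : Real.exp (-(v * x)) ≤ 1 :=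
      Real.exp_le_one_iff.2 (neg_nonpos.2 (mul_nonneg (hc.le.trans hcv) hx))
    calc x ^ 2 * Real.exp (-(v * x)) ≤ 1 * x ^ 2 := by
          rw [mul_comm]; gcongr
      _ ≤ max c⁻¹ 1 * x ^ 2 := by gcongr; exact le_max_right c⁻¹ 1

lemma hasDerivAt_exp_neg_mul (u x : ℝ) :
    HasDerivAt (fun u ↦ Real.exp (-(u * x))) (-(x * Real.exp (-(u * x)))) u :=
  ((hasDerivAt_mul_const x).fun_neg.exp).congr_deriv (by ring)

/-- Jump measures of (sub)critical branching mechanisms, as measures on `ℝ` that do not charge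
`(-∞, 0]`. -/
structure IsBranchingLevyMeasure (ν : Measure ℝ) : Prop where
  ae_pos : ∀ᵐ x ∂ν, 0 < x
  integrable_min_sq : Integrable (fun x ↦ min x (x ^ 2)) ν

/-- The jump part `∫ (e^{-ux} - 1 + ux) ν(dx)` of a branching mechanism. -/
def compensatedLaplace (ν : Measure ℝ) (u : ℝ) : ℝ :=
  ∫ x, (Real.exp (-(u * x)) - 1 + u * x) ∂ν

/-- The derivative of `compensatedLaplace ν` on `(0, ∞)`. -/
def compensatedLaplaceDeriv (ν : Measure ℝ) (u : ℝ) : ℝ :=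
  ∫ x, x * (1 - Real.exp (-(u * x))) ∂ν

/-- The measure `x² ν(dx)`, whose Laplace transform is the second derivative of
`compensatedLaplace ν`; unlike that of `ν` itself, it is always finite on `(0, ∞)`. -/
def sqBiased (ν : Measure ℝ) : Measure ℝ :=
  ν.withDensity fun x ↦ ENNReal.ofReal (x ^ 2)

/-- The branching mechanism with characteristics `(α, β, ν)`. -/
def branchingMechanism (α β : ℝ) (ν : Measure ℝ) (u : ℝ) : ℝ :=
  α * u + β * u ^ 2 + compensatedLaplace ν u

/-- The derivative of `branchingMechanism α β ν` on `(0, ∞)`. -/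
def branchingMechanismDeriv (α β : ℝ) (ν : Measure ℝ) (u : ℝ) : ℝ :=
  α + 2 * β * u + compensatedLaplaceDeriv ν u

lemma mgf_neg_sqBiased (ν : Measure ℝ) (u : ℝ) :
    mgf (fun x ↦ -x) (sqBiased ν) u = ∫ x, x ^ 2 * Real.exp (-(u * x)) ∂ν := by
  rw [mgf, sqBiased, integral_withDensity_eq_integral_toReal_smul (by fun_prop) (by simp)]
  simp [ENNReal.toReal_ofReal (sq_nonneg _)]

namespace IsBranchingLevyMeasure

variable {ν : Measure ℝ} {u : ℝ}

lemma restrict_Ioi {π : Measure ℝ}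
    (hπ : ∫⁻ x in Ioi (0 : ℝ), ENNReal.ofReal (min x (x ^ 2)) ∂π < ⊤) :
    IsBranchingLevyMeasure (π.restrict (Ioi 0)) where
  ae_pos := ae_restrict_mem measurableSet_Ioi
  integrable_min_sq := by
    refine ⟨by fun_prop, ?_⟩
    rwa [hasFiniteIntegral_iff_ofReal]
    filter_upwards [ae_restrict_mem measurableSet_Ioi] with x (hx : 0 < x)
    exact le_min hx.le (sq_nonneg x)

lemma integrable_of_le_min_sq (hν : IsBranchingLevyMeasure ν) {F : ℝ → ℝ} (hF : Continuous F)
    (C : ℝ) (hFC : ∀ x, 0 < x → |F x| ≤ C * min x (x ^ 2)) : Integrable F ν := by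
  refine (hν.integrable_min_sq.const_mul C).mono' hF.aestronglyMeasurable ?_
  filter_upwards [hν.ae_pos] with x hx using hFC x hx

lemma hasDerivAt_integral_of_le_min_sq (hν : IsBranchingLevyMeasure ν) {F F' : ℝ → ℝ → ℝ}
    {s : Set ℝ} (hs : s ∈ 𝓝 u) (hF : ∀ v, Continuous (F v)) (hFu : Integrable (F u) ν)
    (hF' : Continuous (F' u)) (hderiv : ∀ v ∈ s, ∀ x, HasDerivAt (fun v ↦ F v x) (F' v x) v)
    (C : ℝ) (hF'C : ∀ v ∈ s, ∀ x, 0 < x → |F' v x| ≤ C * min x (x ^ 2)) :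
    HasDerivAt (fun v ↦ ∫ x, F v x ∂ν) (∫ x, F' u x ∂ν) u := by
  refine (hasDerivAt_integral_of_dominated_loc_of_deriv_le hs
    (.of_forall fun v ↦ (hF v).aestronglyMeasurable) hFu hF'.aestronglyMeasurable ?_
    (hν.integrable_min_sq.const_mul C) (.of_forall fun x v hv ↦ hderiv v hv x)).2
  filter_upwards [hν.ae_pos] with x hx v hv using hF'C v hv x hx

lemma integrable_mul_one_sub_exp_neg (hν : IsBranchingLevyMeasure ν) (hu : 0 ≤ u) :
    Integrable (fun x ↦ x * (1 - Real.exp (-(u * x)))) ν := by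
  refine hν.integrable_of_le_min_sq (by fun_prop) (max 1 u) fun x hx ↦ ?_
  rw [abs_of_nonneg (mul_nonneg hx.le (one_sub_exp_neg_nonneg (by positivity)))]
  exact mul_one_sub_exp_neg_le hx.le le_rfl

lemma integrable_exp_neg_sub_one_add (hν : IsBranchingLevyMeasure ν) (hu : 0 ≤ u) :
    Integrable (fun x ↦ Real.exp (-(u * x)) - 1 + u * x) ν := by
  refine ((hν.integrable_mul_one_sub_exp_neg hu).const_mul u).mono'
    (by fun_prop) (.of_forall fun x ↦ ?_)
  rw [Real.norm_of_nonneg (exp_neg_sub_one_add_nonneg _), ← mul_assoc]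
  exact exp_neg_sub_one_add_le (u * x)

lemma integrable_sq_mul_exp_neg (hν : IsBranchingLevyMeasure ν) (hu : 0 < u) :
    Integrable (fun x ↦ x ^ 2 * Real.exp (-(u * x))) ν := by
  refine hν.integrable_of_le_min_sq (by fun_prop) (max u⁻¹ 1) fun x hx ↦ ?_
  rw [abs_of_nonneg (by positivity)]
  exact sq_mul_exp_neg_le hx.le hu le_rfl

lemma hasDerivAt_compensatedLaplace (hν : IsBranchingLevyMeasure ν) (hu : 0 < u) :
    HasDerivAt (compensatedLaplace ν) (compensatedLaplaceDeriv ν u) u := by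
  refine hν.hasDerivAt_integral_of_le_min_sq (F := fun u x ↦ Real.exp (-(u * x)) - 1 + u * x)
    (F' := fun u x ↦ x * (1 - Real.exp (-(u * x)))) (Ioo_mem_nhds hu (lt_add_one u))
    (fun v ↦ by fun_prop) (hν.integrable_exp_neg_sub_one_add hu.le) (by fun_prop)
    (fun v _ x ↦ ?_) (max 1 (u + 1)) fun v hv x hx ↦ ?_
  · exact (((hasDerivAt_exp_neg_mul v x).sub_const 1).add (hasDerivAt_mul_const x)).congr_deriv
      (by ring)
  · have hvx : 0 ≤ v * x := mul_nonneg hv.1.le hx.le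
    rw [abs_of_nonneg (mul_nonneg hx.le (one_sub_exp_neg_nonneg hvx))]
    exact mul_one_sub_exp_neg_le hx.le hv.2.le

lemma hasDerivAt_compensatedLaplaceDeriv (hν : IsBranchingLevyMeasure ν) (hu : 0 < u) :
    HasDerivAt (compensatedLaplaceDeriv ν) (mgf (fun x ↦ -x) (sqBiased ν) u) u := by
  rw [mgf_neg_sqBiased]
  refine hν.hasDerivAt_integral_of_le_min_sq (F := fun u x ↦ x * (1 - Real.exp (-(u * x))))
    (F' := fun u x ↦ x ^ 2 * Real.exp (-(u * x))) (Ioi_mem_nhds (half_lt_self hu))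
    (fun v ↦ by fun_prop) (hν.integrable_mul_one_sub_exp_neg hu.le) (by fun_prop)
    (fun v _ x ↦ ?_) (max (u / 2)⁻¹ 1) fun v hv x hx ↦ ?_
  · exact (((hasDerivAt_exp_neg_mul v x).const_sub 1).const_mul x).congr_deriv (by ring)
  · rw [abs_of_nonneg (by positivity)]
    exact sq_mul_exp_neg_le hx.le (half_pos hu) (le_of_lt hv)

lemma Ioi_subset_interior_integrableExpSet (hν : IsBranchingLevyMeasure ν) :
    Ioi 0 ⊆ interior (integrableExpSet (fun x ↦ -x) (sqBiased ν)) := by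
  refine interior_maximal (fun u hu ↦ ?_) isOpen_Ioi
  rw [integrableExpSet, mem_ofPred_eq, sqBiased,
    integrable_withDensity_iff_integrable_smul' (by fun_prop) (by simp)]
  simpa [ENNReal.toReal_ofReal (sq_nonneg _)] using hν.integrable_sq_mul_exp_neg hu

lemma compensatedLaplaceDeriv_nonneg (hν : IsBranchingLevyMeasure ν) (hu : 0 ≤ u) :
    0 ≤ compensatedLaplaceDeriv ν u := by
  refine integral_nonneg_of_ae ?_
  filter_upwards [hν.ae_pos] with x hx
  exact mul_nonneg hx.le (one_sub_exp_neg_nonneg (by positivity))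

lemma compensatedLaplaceDeriv_pos [NeZero ν] (hν : IsBranchingLevyMeasure ν) (hu : 0 < u) :
    0 < compensatedLaplaceDeriv ν u := by
  refine integral_pos_of_ae_pos ?_ (hν.integrable_mul_one_sub_exp_neg hu.le)
  filter_upwards [hν.ae_pos] with x hx
  have : Real.exp (-(u * x)) < 1 := Real.exp_lt_one_iff.2 (neg_lt_zero.2 (mul_pos hu hx))
  exact mul_pos hx (sub_pos.2 this)

lemma hasDerivAt_branchingMechanism (hν : IsBranchingLevyMeasure ν) (α β : ℝ) (hu : 0 < u) :
    HasDerivAt (branchingMechanism α β ν) (branchingMechanismDeriv α β ν u) u := by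
  have hlin : HasDerivAt (fun u ↦ α * u) α u := hasDerivAt_const_mul α
  have hsq : HasDerivAt (fun u ↦ β * u ^ 2) (2 * β * u) u :=
    ((hasDerivAt_pow 2 u).const_mul β).congr_deriv (by ring)
  exact (hlin.add hsq).add (hν.hasDerivAt_compensatedLaplace hu)

lemma branchingMechanismDeriv_pos (hν : IsBranchingLevyMeasure ν) {α β : ℝ} (hα : 0 ≤ α)
    (hβ : 0 ≤ β) (h : ¬(α = 0 ∧ β = 0 ∧ ν = 0)) (hu : 0 < u) :
    0 < branchingMechanismDeriv α β ν u := by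
  have hJ := hν.compensatedLaplaceDeriv_nonneg hu.le
  unfold branchingMechanismDeriv
  rcases hα.eq_or_lt with rfl | hα
  · rcases hβ.eq_or_lt with rfl | hβ
    · have : NeZero ν := ⟨by simpa using h⟩
      linarith [hν.compensatedLaplaceDeriv_pos hu]
    · positivity
  · positivity

theorem bernsteinOn_branchingMechanismDeriv (hν : IsBranchingLevyMeasure ν) {α β : ℝ}
    (hα : 0 ≤ α) (hβ : 0 ≤ β) : BernsteinOn (branchingMechanismDeriv α β ν) (Ioi 0) := by
  have hLaplace (n : ℕ) : CompletelyMonotoneOn n (mgf (fun x ↦ -x) (sqBiased ν)) (Ioi 0) := by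
    refine (completelyMonotoneOn_mgf ?_ n).mono hν.Ioi_subset_interior_integrableExpSet
    exact (withDensity_absolutelyContinuous _ _).ae_le
      (hν.ae_pos.mono fun x hx ↦ neg_nonpos.2 hx.le)
  refine .of_hasDerivAt isOpen_Ioi (fun u hu ↦ ?_) (fun u hu ↦ ?_)
    fun n ↦ (CompletelyMonotoneOn.const (mul_nonneg zero_le_two hβ)).add isOpen_Ioi (hLaplace n)
  · have hu : 0 < u := hu
    have := hν.compensatedLaplaceDeriv_nonneg hu.le
    unfold branchingMechanismDeriv
    positivity
  · exact ((hasDerivAt_const_mul (2 * β)).const_add α).add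
      (hν.hasDerivAt_compensatedLaplaceDeriv hu)

end IsBranchingLevyMeasure

/-- The inverse of a critical or subcritical branching mechanism
(with nondegenerate characteristics) is a Bernstein function on the image
interval `(0, S) = Ψ '' (0,∞)`. -/
theorem inverse_of_branching_mechanism_is_Bernstein
    (Ψ : ℝ → ℝ) (α β : ℝ) (π : Measure ℝ)
    (hα : 0 ≤ α) (hβ : 0 ≤ β)
    (hπfin : ∫⁻ x in Ioi (0:ℝ), ENNReal.ofReal (min x (x ^ 2)) ∂π < ⊤)
    (hΨ : ∀ u : ℝ, 0 < u →
      Ψ u = α * u + β * u ^ 2 + ∫ x in Ioi (0:ℝ), (Real.exp (-(u * x)) - 1 + u * x) ∂π)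
    (hnz : ¬ (α = 0 ∧ β = 0 ∧ π (Ioi (0:ℝ)) = 0))
    (g : ℝ → ℝ) (hg : ∀ u : ℝ, 0 < u → g (Ψ u) = u) :
    ∀ y ∈ Ψ '' Ioi (0:ℝ),
      (∀ n : ℕ, ContDiffAt ℝ n g y) ∧ 0 ≤ g y ∧
      ∀ k : ℕ, 0 ≤ (-1 : ℝ) ^ k * iteratedDeriv (k + 1) g y := by
  set ν := π.restrict (Ioi 0) with hν_def
  have hν : IsBranchingLevyMeasure ν := .restrict_Ioi hπfin
  have hΨ_eq : EqOn Ψ (branchingMechanism α β ν) (Ioi 0) := hΨ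
  have hnz' : ¬(α = 0 ∧ β = 0 ∧ ν = 0) := by rwa [hν_def, Measure.restrict_eq_zero]
  have hpos : ∀ u ∈ Ioi 0, 0 < branchingMechanismDeriv α β ν u :=
    fun u hu ↦ hν.branchingMechanismDeriv_pos hα hβ hnz' hu
  have hinv : LeftInvOn g (branchingMechanism α β ν) (Ioi 0) :=
    fun u hu ↦ by rw [← hΨ_eq hu, hg u hu]
  have hderiv : ∀ u ∈ Ioi 0,
      HasDerivAt (branchingMechanism α β ν) (branchingMechanismDeriv α β ν u) u :=
    fun u hu ↦ hν.hasDerivAt_branchingMechanism α β hu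
  have hΨ' := hν.bernsteinOn_branchingMechanismDeriv hα hβ
  have hopen : IsOpen (branchingMechanism α β ν '' Ioi 0) :=
    isOpen_image_of_hasDerivAt_ne_zero isOpen_Ioi hderiv hΨ'.contDiffOn.continuousOn
      fun u hu ↦ (hpos u hu).ne'
  have hBernstein : BernsteinOn g (branchingMechanism α β ν '' Ioi 0) :=
    .of_leftInvOn isOpen_Ioi Ioi_subset_Ici_self hderiv hΨ' hpos hinv
  rw [hΨ_eq.image_eq]
  exact fun y hy ↦ ⟨fun n ↦ (hBernstein.contDiffOn.contDiffAt (hopen.mem_nhds hy)).of_le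
    (mod_cast le_top), hBernstein.nonneg y hy, fun k ↦ hBernstein.iteratedDeriv_succ_nonneg k y hy⟩
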